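/- For every smooth fan X there exists a non-degenerate upper semi-continuous function φ : C → [0,1] on the Cantor set C such that the quotient L₀^φ / (C × {0}) is homeomorphic to X and G₀^φ is homeomorphic to E(X). -/

import Mathlib

/-!
Write a point of the Cantor fan as `(t c, t)`, with direction `c` in the Cantor set and height
`t`. The required function sends `c` to the largest height `φ(c)` of a point of `X` of
direction `c`. Connectedness of `X` and density of the complement of the Cantor set show
that `X` contains the whole segment below each of its points (`leg_downward`); hence `X` is
described by `(t c, t) ∈ X ↔ 0 ≤ t ≤ φ(c)` (`leg_mem_iff`), and `φ` is upper semi-continuous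
because `X` is closed. The map `(c, t) ↦ (t c, t)` is then a continuous surjection of the
compact set `L₀^φ` onto `X` which collapses exactly the base, so it induces the homeomorphism
of the quotient with `X`.

The endpoints of `X` are exactly the tips `(φ(c) c, φ(c))` with `φ(c) > 0`
(`mem_endpoints_iff`): the vertex and the interior points of legs have order at least two,
while an arc starting at a tip first runs down the leg, since its direction is a continuous
function with values in a totally disconnected set (`IsArc.exists_initial`). On the tips the
map above has the continuous inverse `(x, y) ↦ (x / y, y)`. Nondegeneracy of `φ` is the
hypothesis that the vertex has order at least two: two arcs from the vertex of a fan with a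
single leg would overlap.
-/

open Set Topology

noncomputable section

namespace SmoothFanPaper

/-- `A` is an arc (a homeomorphic copy of `[0,1]`) with endpoints `a` and `b`. -/
def IsArc {α : Type*} [TopologicalSpace α] (A : Set α) (a b : α) : Prop :=
  ∃ h : (Set.Icc (0:ℝ) 1) ≃ₜ A,
    (h ⟨0, Set.left_mem_Icc.mpr zero_le_one⟩ : α) = a ∧
    (h ⟨1, Set.right_mem_Icc.mpr zero_le_one⟩ : α) = b

/-- The order of `x` in `X` is at least `n`: there are `n` arcs contained in `X`, each with
`x` as an endpoint, which pairwise meet only in `x`. -/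
def OrderAtLeast {α : Type*} [TopologicalSpace α] (X : Set α) (x : α) (n : ℕ) : Prop :=
  ∃ A : Fin n → Set α, (∀ i, A i ⊆ X) ∧ (∀ i, ∃ b, IsArc (A i) x b) ∧
    ∀ i j, i ≠ j → A i ∩ A j = {x}

/-- The set of endpoints of `X`: points of order exactly `1`. -/
def Endpoints {α : Type*} [TopologicalSpace α] (X : Set α) : Set α :=
  {x | x ∈ X ∧ OrderAtLeast X x 1 ∧ ¬ OrderAtLeast X x 2}

/-- The Cantor fan: the union of all straight-line segments from the origin to the points of
`cantorSet × {1}` in the plane. -/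
def CantorFan : Set (ℝ × ℝ) :=
  {q | ∃ c ∈ cantorSet, ∃ t ∈ Set.Icc (0:ℝ) 1, q = (t * c, t)}

/-- The cone point of the Cantor fan. -/
def fanVertex : ℝ × ℝ := (0, 0)

/-- A smooth fan: a non-degenerate subcontinuum of the Cantor fan containing the cone point,
whose cone point (the vertex) has order at least 2.  (Every statement below about smooth fans
is invariant under homeomorphisms, so we may realize all smooth fans concretely as such
subcontinua.) -/
structure IsSmoothFan (X : Set (ℝ × ℝ)) : Prop where
  subset_fan : X ⊆ CantorFan
  isCompact : IsCompact X
  isConnected : IsConnected X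
  nondegenerate : ∃ x ∈ X, ∃ y ∈ X, x ≠ y
  vertex_mem : fanVertex ∈ X
  vertex_order : OrderAtLeast X fanVertex 2

/-- Two subsets of `(0,1)` are order isomorphic if some order preserving self-homeomorphism
of `[0,1]` maps one onto the other. -/
def OrderIsomorphic (A B : Set ℝ) : Prop :=
  ∃ h : (Set.Icc (0:ℝ) 1) ≃ₜ (Set.Icc (0:ℝ) 1), StrictMono h ∧
    Subtype.val '' (⇑h '' (Subtype.val ⁻¹' A)) = B

/-- The canonical parametrization of (subsets of) the leg of the Cantor fan through `e`:
a point of the leg is sent to its height, rescaled so that `e` is at height `1`. -/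
def legParam (e : ℝ × ℝ) (S : Set (ℝ × ℝ)) : Set ℝ :=
  (fun q : ℝ × ℝ => q.2 / e.2) '' S

/-- The trace of the closure of a set `T` on the open leg `pe ∖ {p, e}` (where `p` is the
vertex and `pe = segment ℝ p e` is the unique arc in a smooth fan from `p` to an endpoint
`e`), viewed as a subset of `(0,1)` via the canonical parametrization of the leg. -/
def legTrace (T : Set (ℝ × ℝ)) (e : ℝ × ℝ) : Set ℝ :=
  legParam e ((closure T ∩ segment ℝ fanVertex e) \ {fanVertex, e})

/-- `K` enumerates a countably infinite set `𝒦` of compact subsets of `(0,1)`, no two of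
which are order isomorphic. -/
def KFamily (K : ℕ → Set ℝ) : Prop :=
  (∀ n, IsCompact (K n) ∧ K n ⊆ Set.Ioo (0:ℝ) 1) ∧
    ∀ m n, m ≠ n → ¬ OrderIsomorphic (K m) (K n)

/-- `X` is a `𝒦`-fan with witnessing endpoint set `E_𝒦 = {e n : n ∈ ℕ}`. -/
structure IsKFan (K : ℕ → Set ℝ) (X : Set (ℝ × ℝ)) (e : ℕ → ℝ × ℝ) : Prop where
  fan : IsSmoothFan X
  mem_endpoints : ∀ n, e n ∈ Endpoints X
  trace_iso : ∀ n, OrderIsomorphic (legTrace (Endpoints X) (e n)) (K n)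
  trace_not_iso : ∀ x ∈ Endpoints X \ Set.range e, ∀ n,
    ¬ OrderIsomorphic (legTrace (Endpoints X) x) (K n)
  meets_closure : ∀ x ∈ Endpoints X \ Set.range e,
    ((closure (Set.range e) ∩ segment ℝ fanVertex x) \ {fanVertex}).Nonempty

/-- A smooth fan is endpoint rigid if every self-homeomorphism fixes every endpoint. -/
def EndpointRigid (X : Set (ℝ × ℝ)) : Prop :=
  ∀ h : X ≃ₜ X, ∀ x : X, (x : ℝ × ℝ) ∈ Endpoints X → ((h x : X) : ℝ × ℝ) = (x : ℝ × ℝ)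

/-- Complete Erdős space `𝔈_c`: the points of the Hilbert space `ℓ²` all of whose
coordinates lie in `{0} ∪ {1/m : m ≥ 1}`. -/
def ErdosSpace : Set (lp (fun _ : ℕ => ℝ) 2) :=
  {x | ∀ n : ℕ, x n = 0 ∨ ∃ m : ℕ, 0 < m ∧ x n = 1 / m}

/-- `z` is a point of zero-dimensionality of the space it lives in: it has a neighborhood
basis of clopen subsets. -/
def ZeroDimPointAt {α : Type*} [TopologicalSpace α] (z : α) : Prop :=
  ∀ U ∈ nhds z, ∃ V : Set α, IsClopen V ∧ z ∈ V ∧ V ⊆ U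
/-- `L₀^φ = {(x,y) : x ∈ C, 0 ≤ y ≤ φ(x)}`, over the Cantor set. -/
def L0 (φ : ℝ → ℝ) : Set (ℝ × ℝ) :=
  {q | q.1 ∈ cantorSet ∧ 0 ≤ q.2 ∧ q.2 ≤ φ q.1}

/-- `G₀^φ = {(x,φ(x)) : x ∈ C, φ(x) > 0}`, over the Cantor set. -/
def G0 (φ : ℝ → ℝ) : Set (ℝ × ℝ) :=
  {q | q.1 ∈ cantorSet ∧ 0 < q.2 ∧ q.2 = φ q.1}

/-- The setoid on `L₀^φ` identifying the set `C × {0}` to a point. -/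
def L0Setoid (φ : ℝ → ℝ) : Setoid (L0 φ) where
  r a b := a = b ∨ ((a : ℝ × ℝ).2 = 0 ∧ (b : ℝ × ℝ).2 = 0)
  iseqv := by
    constructor
    · exact fun _ => Or.inl rfl
    · rintro a b (rfl | ⟨h1, h2⟩)
      · exact Or.inl rfl
      · exact Or.inr ⟨h2, h1⟩
    · rintro a b c (rfl | ⟨h1, h2⟩) (rfl | ⟨h3, h4⟩)
      · exact Or.inl rfl
      · exact Or.inr ⟨h3, h4⟩
      · exact Or.inr ⟨h1, h2⟩
      · exact Or.inr ⟨h1, h4⟩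

/-- The quotient space `L₀^φ / (C × {0})`. -/
def L0Quot (φ : ℝ → ℝ) : Type := Quotient (L0Setoid φ)

instance (φ : ℝ → ℝ) : TopologicalSpace (L0Quot φ) :=
  inferInstanceAs (TopologicalSpace (Quotient (L0Setoid φ)))

/-- The quotient projection `L₀^φ → L₀^φ / (C × {0})`. -/
def L0Proj (φ : ℝ → ℝ) : L0 φ → L0Quot φ := Quotient.mk (L0Setoid φ)

/-- The setoid on `E × [0,1]` identifying `E × {0}` to a point. -/
def coneSetoid (E : Type*) : Setoid (E × Set.Icc (0:ℝ) 1) where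
  r a b := a = b ∨ ((a.2 : ℝ) = 0 ∧ (b.2 : ℝ) = 0)
  iseqv := by
    constructor
    · exact fun _ => Or.inl rfl
    · rintro a b (rfl | ⟨h1, h2⟩)
      · exact Or.inl rfl
      · exact Or.inr ⟨h2, h1⟩
    · rintro a b c (rfl | ⟨h1, h2⟩) (rfl | ⟨h3, h4⟩)
      · exact Or.inl rfl
      · exact Or.inr ⟨h3, h4⟩
      · exact Or.inr ⟨h1, h2⟩
      · exact Or.inr ⟨h1, h4⟩

/-- The cone over a space `E`: the quotient `(E × [0,1]) / (E × {0})`. -/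
def Cone (E : Type*) [TopologicalSpace E] : Type _ := Quotient (coneSetoid E)

instance (E : Type*) [TopologicalSpace E] : TopologicalSpace (Cone E) :=
  inferInstanceAs (TopologicalSpace (Quotient (coneSetoid E)))

/-- A point of the one-point compactification of the disjoint union of the fans `X i`
is to be glued iff it is `∞` or the vertex of one of the fans. -/
def isGluedPoint {ι : Type*} (X : ι → Set (ℝ × ℝ)) :
    OnePoint (Σ i : ι, X i) → Prop :=
  fun a => a.elim True (fun q => (q.2 : ℝ × ℝ) = fanVertex)

/-- The setoid gluing the vertices (and the point at infinity) of the fans `X i`. -/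
def fanSumSetoid {ι : Type*} (X : ι → Set (ℝ × ℝ)) :
    Setoid (OnePoint (Σ i : ι, X i)) where
  r a b := a = b ∨ (isGluedPoint X a ∧ isGluedPoint X b)
  iseqv := by
    constructor
    · exact fun _ => Or.inl rfl
    · rintro a b (rfl | ⟨h1, h2⟩)
      · exact Or.inl rfl
      · exact Or.inr ⟨h2, h1⟩
    · rintro a b c (rfl | ⟨h1, h2⟩) (rfl | ⟨h3, h4⟩)
      · exact Or.inl rfl
      · exact Or.inr ⟨h3, h4⟩
      · exact Or.inr ⟨h1, h2⟩
      · exact Or.inr ⟨h1, h4⟩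

/-- The sum `Σᵢ Xᵢ` of a (finite or countably infinite) family of smooth fans: the quotient of
the one-point compactification of their disjoint union identifying the set consisting of all
the vertices and the point at infinity to a single point.  (For a finite family, `∞` is an
isolated point which is absorbed by the vertex class, so this agrees with the quotient of the
plain disjoint union identifying the vertices.) -/
def FanSum {ι : Type*} (X : ι → Set (ℝ × ℝ)) : Type _ := Quotient (fanSumSetoid X)

instance {ι : Type*} (X : ι → Set (ℝ × ℝ)) : TopologicalSpace (FanSum X) :=
  inferInstanceAs (TopologicalSpace (Quotient (fanSumSetoid X)))

/-! ### Legs and the height function -/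

/-- The height function of a set `X` in the Cantor fan: `height X c` is the largest height
of a point of `X` on the leg of direction `c`. -/
def height (X : Set (ℝ × ℝ)) (c : ℝ) : ℝ := sSup {t : ℝ | (t * c, t) ∈ X}

theorem isTotallyDisconnected_cantorSet : IsTotallyDisconnected cantorSet := by
  rw [← totallyDisconnectedSpace_subtype_iff]
  exact cantorSetHomeomorphNatToBool.symm.totallyDisconnectedSpace

theorem exists_notMem_cantorSet {a b : ℝ} (hab : a < b) : ∃ x ∈ Ioo a b, x ∉ cantorSet := by
  by_contra! h
  have := isTotallyDisconnected_cantorSet (Ioo a b) h isPreconnected_Ioo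
  obtain ⟨x, hx, hx'⟩ := exists_between hab
  obtain ⟨y, hy, hy'⟩ := exists_between hx
  exact hy'.ne (this ⟨hy, hy'.trans hx'⟩ ⟨hx, hx'⟩)

theorem leg_of_mem {X : Set (ℝ × ℝ)} (hX : X ⊆ CantorFan) {q : ℝ × ℝ} (hq : q ∈ X) :
    ∃ c ∈ cantorSet, ∃ t ∈ Icc (0:ℝ) 1, q = (t * c, t) := hX hq

theorem height_mem {X : Set (ℝ × ℝ)} (hX : IsSmoothFan X) (c : ℝ) :
    (height X c * c, height X c) ∈ X ∧ ∀ t, (t * c, t) ∈ X → t ≤ height X c := by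
  have hcl : IsClosed {t : ℝ | (t * c, t) ∈ X} :=
    hX.isCompact.isClosed.preimage (by fun_prop)
  have hbdd : BddAbove {t : ℝ | (t * c, t) ∈ X} := by
    refine ⟨1, fun t ht => ?_⟩
    obtain ⟨d, -, u, hu, h⟩ := hX.subset_fan ht
    simp only [Prod.mk.injEq] at h
    rw [h.2]; exact hu.2
  have hne : {t : ℝ | (t * c, t) ∈ X}.Nonempty := ⟨0, by simpa [fanVertex] using hX.vertex_mem⟩
  exact ⟨hcl.csSup_mem hne hbdd, fun t ht => le_csSup hbdd ht⟩

theorem height_nonneg {X : Set (ℝ × ℝ)} (hX : IsSmoothFan X) (c : ℝ) : 0 ≤ height X c :=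
  (height_mem hX c).2 0 (by simpa [fanVertex] using hX.vertex_mem)

theorem height_le_one {X : Set (ℝ × ℝ)} (hX : IsSmoothFan X) (c : ℝ) : height X c ≤ 1 := by
  obtain ⟨d, -, u, hu, h⟩ := hX.subset_fan (height_mem hX c).1
  simp only [Prod.mk.injEq] at h
  rw [h.2]; exact hu.2

/-- A smooth fan meets each leg in an initial segment: if the point of height `s` were missing,
a thin cone around the leg, truncated at height `s` and bounded by directions in the gaps of the
Cantor set, would disconnect the fan. -/
theorem leg_downward {X : Set (ℝ × ℝ)} (hX : IsSmoothFan X) {c s t : ℝ}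
    (ht : (t * c, t) ∈ X) (h0 : 0 ≤ s) (hst : s ≤ t) : (s * c, s) ∈ X := by
  by_contra hs
  have hv : ((0:ℝ), (0:ℝ)) ∈ X := hX.vertex_mem
  have hs0 : 0 < s := lt_of_le_of_ne h0 (by rintro rfl; exact hs (by simpa using hv))
  have hst' : s < t := lt_of_le_of_ne hst (by rintro rfl; exact hs ht)
  have hop : IsOpen {d : ℝ | (s * d, s) ∉ X} :=
    (hX.isCompact.isClosed.preimage (f := fun d : ℝ => (s * d, s)) (by fun_prop)).isOpen_compl
  obtain ⟨ε, hε, hball⟩ := Metric.isOpen_iff.1 hop c hs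
  obtain ⟨p, hp, hpC⟩ := exists_notMem_cantorSet (show c - ε < c by linarith)
  obtain ⟨q, hq, hqC⟩ := exists_notMem_cantorSet (show c < c + ε by linarith)
  have hU : IsOpen {x : ℝ × ℝ | s < x.2 ∧ p * x.2 < x.1 ∧ x.1 < q * x.2} := by
    simp only [ofPred_and]
    exact (isOpen_lt (by fun_prop) (by fun_prop)).inter
      ((isOpen_lt (by fun_prop) (by fun_prop)).inter (isOpen_lt (by fun_prop) (by fun_prop)))
  have hV : IsOpen {x : ℝ × ℝ | x.2 < s ∨ x.1 < p * x.2 ∨ q * x.2 < x.1} := by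
    simp only [ofPred_or]
    exact (isOpen_lt (by fun_prop) (by fun_prop)).union
      ((isOpen_lt (by fun_prop) (by fun_prop)).union (isOpen_lt (by fun_prop) (by fun_prop)))
  obtain ⟨x, -, ⟨h1, h2, h3⟩, h4⟩ := hX.isConnected.isPreconnected _ _ hU hV
    (by
      intro x hx
      obtain ⟨d, hd, u, hu, rfl⟩ := leg_of_mem hX.subset_fan hx
      by_contra hcon
      simp only [mem_union, mem_ofPred_eq, not_or, not_and, not_lt] at hcon
      obtain ⟨hUn, hsu, hpu, hqu⟩ := hcon
      have hu0 : 0 < u := hs0.trans_le hsu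
      have hpd : p ≤ d := by
        by_contra! h; nlinarith
      have hdq : d ≤ q := by
        by_contra! h; nlinarith
      have hpd' : p < d := lt_of_le_of_ne hpd (by rintro rfl; exact hpC hd)
      have hdq' : d < q := lt_of_le_of_ne hdq (by rintro rfl; exact hqC hd)
      rcases hsu.lt_or_eq with h | rfl
      · have := hUn h (by nlinarith)
        nlinarith
      · refine hball (a := d) ?_ hx
        rw [Metric.mem_ball, Real.dist_eq, abs_lt]
        constructor <;> linarith [hp.1, hq.2])
    ⟨(t * c, t), ht, hst', by nlinarith [hp.2], by nlinarith [hq.1]⟩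
    ⟨(0, 0), hv, Or.inl hs0⟩
  rcases h4 with h | h | h
  · exact lt_asymm h h1
  · exact lt_asymm h h2
  · exact lt_asymm h h3

theorem leg_mem_iff {X : Set (ℝ × ℝ)} (hX : IsSmoothFan X) {c t : ℝ} :
    (t * c, t) ∈ X ↔ 0 ≤ t ∧ t ≤ height X c := by
  refine ⟨fun h => ⟨?_, (height_mem hX c).2 t h⟩,
    fun h => leg_downward hX (height_mem hX c).1 h.1 h.2⟩
  obtain ⟨d, -, u, hu, h⟩ := hX.subset_fan h
  simp only [Prod.mk.injEq] at h
  rw [h.2]; exact hu.1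

theorem height_usc {X : Set (ℝ × ℝ)} (hX : IsSmoothFan X) :
    UpperSemicontinuousOn (height X) cantorSet := by
  intro x _ y hy
  have hop : IsOpen {d : ℝ | (y * d, y) ∉ X} :=
    (hX.isCompact.isClosed.preimage (f := fun d : ℝ => (y * d, y)) (by fun_prop)).isOpen_compl
  have hy0 : 0 ≤ y := (height_nonneg hX x).trans hy.le
  refine mem_nhdsWithin_of_mem_nhds
    (Filter.mem_of_superset (hop.mem_nhds (x := x) ?_) fun d hd => ?_)
  · exact fun h => absurd ((leg_mem_iff hX).1 h).2 (not_le.2 hy)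
  · exact not_le.1 fun h => hd ((leg_mem_iff hX).2 ⟨hy0, h⟩)

/-! ### Arcs in the fan -/

/-- The segment of the leg of direction `c` between heights `t` and `s` is an arc. -/
theorem isArc_legSegment (c : ℝ) {t s : ℝ} (hst : s ≠ t) :
    IsArc (range fun x : Icc (0:ℝ) 1 => ((t + x * (s - t)) * c, t + x * (s - t)))
      (t * c, t) (s * c, s) := by
  have hcont : Continuous fun x : Icc (0:ℝ) 1 =>
      (((t + x * (s - t)) * c, t + x * (s - t)) : ℝ × ℝ) := by fun_prop
  have hinj : Function.Injective fun x : Icc (0:ℝ) 1 =>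
      (((t + x * (s - t)) * c, t + x * (s - t)) : ℝ × ℝ) := by
    intro x y h
    have h2 := (Prod.ext_iff.1 h).2
    simp only [add_right_inj] at h2
    exact Subtype.ext (mul_right_cancel₀ (sub_ne_zero.2 hst) h2)
  refine ⟨(hcont.isClosedEmbedding hinj).isEmbedding.toHomeomorph, ?_, ?_⟩
  · simp
  · simp

/-- An arc as a continuous map on the line, injective on `[0,1]`. -/
theorem IsArc.exists_param {A : Set (ℝ × ℝ)} {a b : ℝ × ℝ} (h : IsArc A a b) :
    ∃ F : ℝ → ℝ × ℝ, Continuous F ∧ (∀ x, F x ∈ A) ∧ InjOn F (Icc 0 1) ∧ F 0 = a := by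
  obtain ⟨h, h0, -⟩ := h
  refine ⟨fun x => h (projIcc 0 1 zero_le_one x), ?_, fun x => Subtype.coe_prop _, ?_, ?_⟩
  · exact continuous_subtype_val.comp (h.continuous.comp continuous_projIcc)
  · intro x hx y hy hxy
    have := h.injective (Subtype.ext hxy)
    rw [projIcc_of_mem _ hx, projIcc_of_mem _ hy] at this
    exact congrArg Subtype.val this
  · simpa using h0

/-- An arc in the Cantor fan issuing from a point other than the cone point stays in the leg of
that point for a while, since the direction is a continuous function with values in the totally
disconnected Cantor set away from the cone point. -/
theorem IsArc.exists_initial {A : Set (ℝ × ℝ)} (hA : A ⊆ CantorFan) {c t : ℝ} {b : ℝ × ℝ}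
    (ht : 0 < t) (h : IsArc A (t * c, t) b) :
    ∃ s, s ≠ t ∧ ∀ u ∈ uIcc s t, (u * c, u) ∈ A := by
  obtain ⟨F, hF, hFA, hinj, hF0⟩ := h.exists_param
  have hpos : ∀ᶠ x in 𝓝 (0:ℝ), 0 < (F x).2 := by
    refine (continuous_snd.comp hF).continuousAt.eventually (lt_mem_nhds ?_)
    simpa [hF0] using ht
  obtain ⟨ε, hε, hball⟩ := Metric.eventually_nhds_iff.1 hpos
  set δ := min 1 (ε / 2) with hδ
  have hδ0 : 0 < δ := by positivity
  have hδ1 : δ ≤ 1 := min_le_left _ _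
  have hδε : δ < ε := (min_le_right _ _).trans_lt (by linarith)
  have hpos' : ∀ x ∈ Icc 0 δ, 0 < (F x).2 := by
    intro x hx
    apply hball
    rw [Real.dist_eq, sub_zero, abs_of_nonneg hx.1]
    exact hx.2.trans_lt hδε
  have hslope : ContinuousOn (fun x => (F x).1 / (F x).2) (Icc 0 δ) :=
    ContinuousOn.div (by fun_prop) (by fun_prop) fun x hx => (hpos' x hx).ne'
  have hsub : ((fun x => (F x).1 / (F x).2) '' Icc 0 δ).Subsingleton := by
    refine isTotallyDisconnected_cantorSet _ ?_ (isPreconnected_Icc.image _ hslope)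
    rintro _ ⟨x, hx, rfl⟩
    obtain ⟨d, hd, u, hu, hxd⟩ := hA (hFA x)
    have := hpos' x hx
    simp only [hxd] at this ⊢
    rwa [mul_div_cancel_left₀ _ this.ne']
  have hleg : ∀ x ∈ Icc 0 δ, F x = ((F x).2 * c, (F x).2) := by
    intro x hx
    have := hsub ⟨x, hx, rfl⟩ ⟨0, left_mem_Icc.2 hδ0.le, rfl⟩
    simp only [hF0, mul_div_cancel_left₀ _ ht.ne'] at this
    rw [div_eq_iff (hpos' x hx).ne'] at this
    ext
    · rw [this]; ring
    · rfl
  have hδm : δ ∈ Icc 0 δ := right_mem_Icc.2 hδ0.le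
  refine ⟨(F δ).2, fun hs => ?_, fun u hu => ?_⟩
  · have hFδ : F δ = F 0 := by rw [hleg δ hδm, hs, hF0]
    exact hδ0.ne' (hinj ⟨hδ0.le, hδ1⟩ ⟨le_rfl, zero_le_one⟩ hFδ)
  · have hivt := intermediate_value_uIcc (a := δ) (b := 0) (f := fun x => (F x).2)
      (by fun_prop)
    simp only [hF0] at hivt
    obtain ⟨x, hx, rfl⟩ := hivt hu
    rw [uIcc_of_ge hδ0.le] at hx
    rw [← hleg x hx]
    exact hFA x

/-- An arc in the Cantor fan issuing from the cone point has points of all small heights. -/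
theorem IsArc.exists_heights {A : Set (ℝ × ℝ)} (hA : A ⊆ CantorFan) {b : ℝ × ℝ}
    (h : IsArc A fanVertex b) :
    ∃ u > 0, ∀ v ∈ Icc 0 u, ∃ q ∈ A, q.2 = v := by
  obtain ⟨F, hF, hFA, hinj, hF0⟩ := h.exists_param
  obtain ⟨d, -, u, hu, h1⟩ := hA (hFA 1)
  have hu0 : u ≠ 0 := by
    rintro rfl
    have : F 1 = F 0 := by rw [h1, hF0]; simp [fanVertex]
    exact one_ne_zero (hinj ⟨zero_le_one, le_rfl⟩ ⟨le_rfl, zero_le_one⟩ this)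
  refine ⟨u, lt_of_le_of_ne hu.1 hu0.symm, fun v hv => ?_⟩
  have hivt := intermediate_value_Icc (a := 0) (b := 1) (f := fun x => (F x).2) zero_le_one
    (by fun_prop)
  simp only [hF0, h1, fanVertex] at hivt
  obtain ⟨x, -, rfl⟩ := hivt hv
  exact ⟨_, hFA x, rfl⟩

/-! ### Nondegeneracy and endpoints -/

/-- If only one leg were nontrivial, any two arcs from the vertex would overlap on it. -/
theorem height_nondegenerate {X : Set (ℝ × ℝ)} (hX : IsSmoothFan X) :
    ∃ x ∈ cantorSet, ∃ y ∈ cantorSet, x ≠ y ∧ 0 < height X x ∧ 0 < height X y := by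
  by_contra! hcon
  obtain ⟨A, hAX, hA, hdisj⟩ := hX.vertex_order
  obtain ⟨b₀, hb₀⟩ := hA 0
  obtain ⟨b₁, hb₁⟩ := hA 1
  obtain ⟨u₀, hu₀, h₀⟩ := hb₀.exists_heights ((hAX 0).trans hX.subset_fan)
  obtain ⟨u₁, hu₁, h₁⟩ := hb₁.exists_heights ((hAX 1).trans hX.subset_fan)
  have hm : 0 < min u₀ u₁ := lt_min hu₀ hu₁
  obtain ⟨q, hq, hqv⟩ := h₀ _ ⟨hm.le, min_le_left _ _⟩
  obtain ⟨r, hr, hrv⟩ := h₁ _ ⟨hm.le, min_le_right _ _⟩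
  have hqX := hAX 0 hq
  have hrX := hAX 1 hr
  obtain ⟨c, hc, t, -, rfl⟩ := hX.subset_fan hqX
  obtain ⟨d, hd, s, -, rfl⟩ := hX.subset_fan hrX
  simp only at hqv hrv
  subst hqv
  subst hrv
  have hcd : c = d := by
    by_contra hne
    have h1 := ((leg_mem_iff hX).1 hqX).2
    have h2 := ((leg_mem_iff hX).1 hrX).2
    linarith [hcon c hc d hd hne (by linarith)]
  subst hcd
  have : (min u₀ u₁ * c, min u₀ u₁) ∈ A 0 ∩ A 1 := ⟨hq, hr⟩
  rw [hdisj 0 1 (by decide)] at this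
  simp only [fanVertex, mem_singleton_iff, Prod.mk.injEq] at this
  exact hm.ne' this.2

theorem orderAtLeast_one_tip {X : Set (ℝ × ℝ)} (hX : IsSmoothFan X) {c : ℝ}
    (hc : 0 < height X c) : OrderAtLeast X (height X c * c, height X c) 1 := by
  refine ⟨fun _ => _, fun _ => ?_, fun _ => ⟨_, isArc_legSegment c hc.ne⟩,
    fun i j hij => absurd (Subsingleton.elim i j) hij⟩
  rintro _ ⟨⟨x, hx0, hx1⟩, rfl⟩
  exact (leg_mem_iff hX).2 ⟨by nlinarith, by nlinarith⟩

/-- Two arcs issuing from the tip of a leg both start by descending along this leg. -/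
theorem not_orderAtLeast_two_tip {X : Set (ℝ × ℝ)} (hX : IsSmoothFan X) {c : ℝ}
    (hc : 0 < height X c) : ¬ OrderAtLeast X (height X c * c, height X c) 2 := by
  rintro ⟨A, hAX, hA, hdisj⟩
  have key : ∀ i, ∃ s < height X c, ∀ u ∈ Icc s (height X c), (u * c, u) ∈ A i := by
    intro i
    obtain ⟨b, hb⟩ := hA i
    obtain ⟨s, hs, h⟩ := hb.exists_initial ((hAX i).trans hX.subset_fan) hc
    have hle : s ≤ height X c := ((leg_mem_iff hX).1 (hAX i (h s left_mem_uIcc))).2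
    exact ⟨s, lt_of_le_of_ne hle hs, fun u hu => h u (by rwa [uIcc_of_le hle])⟩
  obtain ⟨s₀, hs₀, h₀⟩ := key 0
  obtain ⟨s₁, hs₁, h₁⟩ := key 1
  have hm : max s₀ s₁ < height X c := max_lt hs₀ hs₁
  have : (max s₀ s₁ * c, max s₀ s₁) ∈ A 0 ∩ A 1 :=
    ⟨h₀ _ ⟨le_max_left _ _, hm.le⟩, h₁ _ ⟨le_max_right _ _, hm.le⟩⟩
  rw [hdisj 0 1 (by decide)] at this
  simp only [mem_singleton_iff, Prod.mk.injEq] at this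
  exact hm.ne this.2

/-- The part of the leg below an interior point and the part above it are two arcs. -/
theorem orderAtLeast_two_interior {X : Set (ℝ × ℝ)} (hX : IsSmoothFan X) {c t : ℝ}
    (ht : 0 < t) (htc : t < height X c) : OrderAtLeast X (t * c, t) 2 := by
  set S : ℝ → Set (ℝ × ℝ) := fun s =>
    range fun x : Icc (0:ℝ) 1 => ((t + x * (s - t)) * c, t + x * (s - t)) with hS
  have hmem : ∀ s, (t * c, t) ∈ S s := fun s => ⟨⟨0, by simp⟩, by simp⟩
  have hlow : ∀ q ∈ S 0, q.2 ≤ t := by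
    rintro _ ⟨⟨x, hx0, hx1⟩, rfl⟩
    dsimp only; nlinarith
  have hhigh : ∀ q ∈ S (height X c), t ≤ q.2 := by
    rintro _ ⟨⟨x, hx0, hx1⟩, rfl⟩
    dsimp only; nlinarith
  have hleg : ∀ s, ∀ q ∈ S s, q = (q.2 * c, q.2) := by
    rintro s _ ⟨x, rfl⟩; rfl
  have hinter : S 0 ∩ S (height X c) = {(t * c, t)} := by
    refine Subset.antisymm (fun q hq => ?_) (singleton_subset_iff.2 ⟨hmem _, hmem _⟩)
    have : q.2 = t := le_antisymm (hlow q hq.1) (hhigh q hq.2)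
    rw [mem_singleton_iff, hleg _ q hq.1, this]
  refine ⟨![S 0, S (height X c)], ?_, ?_, ?_⟩
  · rw [Fin.forall_fin_two]
    constructor
    · rintro _ ⟨⟨x, hx0, hx1⟩, rfl⟩
      exact (leg_mem_iff hX).2 ⟨by nlinarith, by nlinarith⟩
    · rintro _ ⟨⟨x, hx0, hx1⟩, rfl⟩
      exact (leg_mem_iff hX).2 ⟨by nlinarith, by nlinarith⟩
  · rw [Fin.forall_fin_two]
    exact ⟨⟨_, isArc_legSegment c ht.ne⟩, ⟨_, isArc_legSegment c htc.ne'⟩⟩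
  · intro i j hij
    fin_cases i <;> fin_cases j
    · exact absurd rfl hij
    · exact hinter
    · exact (inter_comm _ _).trans hinter
    · exact absurd rfl hij

theorem mem_endpoints_iff {X : Set (ℝ × ℝ)} (hX : IsSmoothFan X) {q : ℝ × ℝ} :
    q ∈ Endpoints X ↔
      ∃ c ∈ cantorSet, 0 < height X c ∧ q = (height X c * c, height X c) := by
  constructor
  · rintro ⟨hq, -, h2⟩
    obtain ⟨c, hc, t, ht, rfl⟩ := hX.subset_fan hq
    have htc := ((leg_mem_iff hX).1 hq).2
    have ht0 : 0 < t := by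
      refine lt_of_le_of_ne ht.1 ?_
      rintro rfl
      exact h2 (by simpa [fanVertex] using hX.vertex_order)
    have : t = height X c := by
      by_contra hne
      exact h2 (orderAtLeast_two_interior hX ht0 (lt_of_le_of_ne htc hne))
    exact ⟨c, hc, this ▸ ht0, by rw [this]⟩
  · rintro ⟨c, -, hpos, rfl⟩
    exact ⟨(height_mem hX c).1, orderAtLeast_one_tip hX hpos, not_orderAtLeast_two_tip hX hpos⟩

/-! ### The homeomorphisms -/

/-- The set `G₀` of the height function is carried onto the endpoint set by
`(c, t) ↦ (t c, t)`. -/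
def endpointsHomeo {X : Set (ℝ × ℝ)} (hX : IsSmoothFan X) :
    G0 (height X) ≃ₜ Endpoints X where
  toFun g := ⟨(g.1.2 * g.1.1, g.1.2), (mem_endpoints_iff hX).2
    ⟨g.1.1, g.2.1, g.2.2.2 ▸ g.2.2.1, by rw [← g.2.2.2]⟩⟩
  invFun e := ⟨(e.1.1 / e.1.2, e.1.2), by
    obtain ⟨c, hc, hpos, h⟩ := (mem_endpoints_iff hX).1 e.2
    rw [h]
    simp only [mul_div_cancel_left₀ _ hpos.ne']
    exact ⟨hc, hpos, rfl⟩⟩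
  left_inv g := by
    apply Subtype.ext
    simp only [mul_div_cancel_left₀ _ g.2.2.1.ne']
  right_inv e := by
    obtain ⟨c, hc, hpos, h⟩ := (mem_endpoints_iff hX).1 e.2
    apply Subtype.ext
    simp only [h, mul_div_cancel_left₀ _ hpos.ne']
  continuous_toFun := by fun_prop
  continuous_invFun := by
    refine Continuous.subtype_mk (Continuous.prodMk (Continuous.div₀ (by fun_prop)
      (by fun_prop) fun e => ?_) (by fun_prop)) _
    obtain ⟨c, hc, hpos, h⟩ := (mem_endpoints_iff hX).1 e.2
    rw [h]; exact hpos.ne'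

theorem isCompact_L0_height {X : Set (ℝ × ℝ)} (hX : IsSmoothFan X) :
    IsCompact (L0 (height X)) := by
  have heq : L0 (height X) =
      (cantorSet ×ˢ Icc (0:ℝ) 1) ∩ {q : ℝ × ℝ | (q.2 * q.1, q.2) ∈ X} := by
    ext q
    simp only [L0, mem_inter_iff, mem_prod, mem_ofPred_eq, leg_mem_iff hX, mem_Icc]
    have := height_le_one hX q.1
    constructor
    · rintro ⟨h1, h2, h3⟩; exact ⟨⟨h1, h2, h3.trans this⟩, h2, h3⟩
    · rintro ⟨⟨h1, -⟩, h2, h3⟩; exact ⟨h1, h2, h3⟩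
  rw [heq]
  exact (isCompact_cantorSet.prod isCompact_Icc).inter_right
    (hX.isCompact.isClosed.preimage (by fun_prop))

/-- The map `(c, t) ↦ (t c, t)` collapses exactly the base of `L₀`, so it induces a continuous
bijection of the compact quotient onto the fan. -/
theorem nonempty_quotHomeo {X : Set (ℝ × ℝ)} (hX : IsSmoothFan X) :
    Nonempty (L0Quot (height X) ≃ₜ X) := by
  let f : L0 (height X) → X := fun q => ⟨(q.1.2 * q.1.1, q.1.2), (leg_mem_iff hX).2 q.2.2⟩
  have hf : Continuous f := by fun_prop
  have hker : ∀ a b, (L0Setoid (height X)).r a b → f a = f b := by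
    rintro a b (rfl | ⟨h1, h2⟩)
    · rfl
    · simp [f, h1, h2]
  let g : L0Quot (height X) → X := Quotient.lift f hker
  have hg : Continuous g := hf.quotient_lift hker
  have hbij : Function.Bijective g := by
    constructor
    · intro x y
      induction x using Quotient.inductionOn with | _ a
      induction y using Quotient.inductionOn with | _ b
      intro hab
      have hab' : f a = f b := hab
      simp only [f, Subtype.mk.injEq, Prod.mk.injEq] at hab'
      obtain ⟨h1, h2⟩ := hab'
      apply Quotient.sound
      by_cases h0 : b.1.2 = 0
      · exact Or.inr ⟨h2.trans h0, h0⟩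
      · rw [h2] at h1
        exact Or.inl (Subtype.ext (Prod.ext (mul_left_cancel₀ h0 h1) h2))
    · rintro ⟨q, hq⟩
      obtain ⟨c, hc, t, ht, rfl⟩ := hX.subset_fan hq
      exact ⟨L0Proj _ ⟨(c, t), hc, (leg_mem_iff hX).1 hq⟩, rfl⟩
  have : CompactSpace (L0 (height X)) := isCompact_iff_compactSpace.1 (isCompact_L0_height hX)
  have : CompactSpace (L0Quot (height X)) :=
    inferInstanceAs (CompactSpace (Quotient (L0Setoid (height X))))
  exact ⟨(isHomeomorph_iff_continuous_bijective.2 ⟨hg, hbij⟩).homeomorph⟩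

/-- For every smooth fan `X` there is a non-degenerate upper
semi-continuous `φ : C → [0,1]` on the Cantor set such that `L₀^φ / (C × {0})` is
homeomorphic to `X` and `G₀^φ` is homeomorphic to `E(X)`. -/
theorem exists_usc_representation (X : Set (ℝ × ℝ)) (hX : IsSmoothFan X) :
    ∃ φ : ℝ → ℝ, (∀ x ∈ cantorSet, φ x ∈ Set.Icc (0:ℝ) 1) ∧
      UpperSemicontinuousOn φ cantorSet ∧
      (∃ x ∈ cantorSet, ∃ y ∈ cantorSet, x ≠ y ∧ 0 < φ x ∧ 0 < φ y) ∧
      Nonempty (L0Quot φ ≃ₜ ↥X) ∧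
      Nonempty (↥(G0 φ) ≃ₜ ↥(Endpoints X)) := by
  exact ⟨height X, fun x _ => ⟨height_nonneg hX x, height_le_one hX x⟩, height_usc hX,
    height_nondegenerate hX, nonempty_quotHomeo hX, ⟨endpointsHomeo hX⟩⟩

end SmoothFanPaper
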